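/- Let α > 0 be a non-integer real number and let k_l, k_s, d_l, d_s, γ, T_i, T_∞, h₀ be positive constants with ω = √(d_l/d_s), and suppose h₀ > 2^α Γ(α/2 + 1) k_s T_i d_s^{(α−1)/2} / (T_∞ √π). Let ν be the unique positive solution of equation (24): −(k_s T_i d_s^{(α−1)/2} / (γ d_l^{(α+1)/2})) f₁(x) + (h₀ T_∞ / (γ 2^α d_l^{(α+1)/2})) f₂(x) = x^{α+1}. Define s(t) = 2ν√(d_l t); F_l = −2 h₀ T_∞ √(d_l) M(−α/2,1/2,−ν²) / [ k_l M(−α/2,1/2,−ν²) + 2√(d_l) h₀ ν M(−α/2+1/2,3/2,−ν²) ]; E_l = −ν M(−α/2+1/2,3/2,−ν²) F_l / M(−α/2,1/2,−ν²); F_s = −T_i 2^{α+1} d_s^{α/2} M(α/2+1/2,1/2,ν²ω²) / U(α/2+1/2,1/2,ν²ω²); E_s = −νω M(−α/2+1/2,3/2,−ν²ω²) F_s / M(−α/2,1/2,−ν²ω²); Ψ_l(x,t) = t^{α/2}[ E_l M(−α/2,1/2,−η_l²) + F_l η_l M(−α/2+1/2,3/2,−η_l²) ] with η_l = x/(2√(d_l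 t)); Ψ_s(x,t) = t^{α/2}[ E_s M(−α/2,1/2,−η_s²) + F_s η_s M(−α/2+1/2,3/2,−η_s²) ] with η_s = x/(2√(d_s t)). Then for all t > 0: (i) ∂Ψ_l/∂t = d_l ∂²Ψ_l/∂x² for 0 < x < s(t); (ii) ∂Ψ_s/∂t = d_s ∂²Ψ_s/∂x² for x > s(t); (iii) Ψ_l(s(t),t) = Ψ_s(s(t),t) = 0; (iv) k_s ∂Ψ_s/∂x(s(t),t) − k_l ∂Ψ_l/∂x(s(t),t) = γ s(t)^α s'(t); (v) k_l ∂Ψ_l/∂x(0,t) = h₀ t^{−1/2} ( Ψ_l(0,t) − T_∞ t^{α/2} ); and (vi) for every x > 0, lim_{t→0⁺} Ψ_s(x,t) = −T_i x^α. -/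

import Mathlib

noncomputable def poch (a : ℝ) (s : ℕ) : ℝ := ∏ i ∈ Finset.range s, (a + i)

/-- Kummer's confluent hypergeometric function `M(a,b,z)`,
defined by the everywhere-convergent series `M(a,b,z) = Σ_{s} (a)_s z^s / ((b)_s s!)`. -/
noncomputable def kummerM (a b z : ℝ) : ℝ :=
  ∑' s : ℕ, poch a s / (poch b s * (Nat.factorial s)) * z ^ s

/-- Tricomi's confluent hypergeometric function
`U(a,b,z) = (1/Γ(a)) ∫_0^∞ e^{−z t} t^{a−1} (1+t)^{b−a−1} dt`. -/
noncomputable def tricomiU (a b z : ℝ) : ℝ :=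
  (1 / Real.Gamma a) *
    ∫ t in Set.Ioi (0:ℝ), Real.exp (-z * t) * t ^ (a - 1) * (1 + t) ^ (b - a - 1)


section
lemma poch_succ_right (a : ℝ) (n : ℕ) : poch a (n+1) = poch a n * (a + n) := by
  simp [poch, Finset.prod_range_succ]

lemma poch_succ_left (a : ℝ) (n : ℕ) : poch a (n+1) = a * poch (a+1) n := by
  simp only [poch, Finset.prod_range_succ']
  rw [mul_comm]
  simp only [Nat.cast_zero, add_zero, Nat.cast_add, Nat.cast_one]
  congr 1
  apply Finset.prod_congr rfl
  intros; ring

lemma poch_pos {a : ℝ} (ha : 0 < a) (n : ℕ) : 0 < poch a n := by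
  unfold poch
  apply Finset.prod_pos
  intros; positivity

noncomputable def kc (a b : ℝ) (n : ℕ) : ℝ := poch a n / (poch b n * (Nat.factorial n))

lemma kc_succ (a : ℝ) {b : ℝ} (hb : 0 < b) (n : ℕ) :
    kc a b (n+1) = kc a b n * ((a + n) / ((b + n) * (n+1))) := by
  unfold kc
  have h1 := (poch_pos hb n).ne'
  have h2 : b + n ≠ 0 := by positivity
  rw [poch_succ_right, poch_succ_right, Nat.factorial_succ]
  push_cast
  have h3 : (n:ℝ) + 1 ≠ 0 := by positivity
  field_simp

lemma kc_deriv (a : ℝ) {b : ℝ} (hb : 0 < b) (n : ℕ) :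
    (n+1) * kc a b (n+1) = a / b * kc (a+1) (b+1) n := by
  unfold kc
  have h1 := (poch_pos (show 0 < b + 1 by linarith) n).ne'
  rw [poch_succ_left, poch_succ_left, Nat.factorial_succ]
  push_cast
  have h3 : (n:ℝ) + 1 ≠ 0 := by positivity
  field_simp

lemma kc_bound (a : ℝ) {b : ℝ} (hb : 0 < b) (n : ℕ) :
    |kc a b n| ≤ (1 + |a| / b) ^ n / (Nat.factorial n) := by
  induction n with
  | zero => simp [kc, poch]
  | succ n ih =>
    rw [kc_succ a hb, abs_mul]
    have h2 : |(a + n) / ((b + n) * (n+1))| ≤ (1 + |a| / b) / (n+1) := by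
      rw [abs_div, abs_of_pos (show 0 < (b + n) * ((n:ℝ)+1) by positivity)]
      rw [div_le_div_iff₀ (by positivity) (by positivity)]
      have h3 : |a + n| ≤ |a| + n := by
        simpa using abs_add_le a (n:ℝ)
      have h4 : |a| + n ≤ (1 + |a| / b) * (b + n) := by
        have : (1 + |a| / b) * (b + n) = b + n + |a| + |a| / b * n := by field_simp; ring
        rw [this]
        have : 0 ≤ |a| / b * n := by positivity
        linarith
      have h5 : (0:ℝ) ≤ (n:ℝ) + 1 := by positivity
      nlinarith [mul_le_mul_of_nonneg_right (h3.trans h4) h5]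
    calc _ ≤ (1 + |a| / b) ^ n / (Nat.factorial n) * ((1 + |a| / b) / (n+1)) := by
          gcongr
      _ = _ := by
        rw [Nat.factorial_succ]; push_cast; rw [pow_succ]; ring_nf; field_simp

lemma kc_summable (a : ℝ) {b : ℝ} (hb : 0 < b) (z : ℝ) :
    Summable (fun n => kc a b n * z ^ n) := by
  apply Summable.of_norm_bounded (Real.summable_pow_div_factorial ((1 + |a| / b) * |z|))
  intro n
  rw [Real.norm_eq_abs, abs_mul, abs_pow, mul_pow]
  calc _ ≤ (1 + |a| / b) ^ n / (Nat.factorial n) * |z| ^ n := by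
        gcongr; exact kc_bound a hb n
    _ = _ := by ring

lemma kM_hasSum (a : ℝ) {b : ℝ} (hb : 0 < b) (z : ℝ) :
    HasSum (fun n => kc a b n * z ^ n) (kummerM a b z) := (kc_summable a hb z).hasSum

lemma kM_hasSum_deriv (a : ℝ) {b : ℝ} (hb : 0 < b) (z : ℝ) :
    HasSum (fun n : ℕ => kc a b (n+1) * (n+1) * z ^ n) (a / b * kummerM (a+1) (b+1) z) := by
  have := (kM_hasSum (a+1) (show 0 < b+1 by linarith) z).mul_left (a/b)
  convert! this using 1
  funext n
  rw [← mul_assoc, ← kc_deriv a hb]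
  ring

lemma kM_zero (a b : ℝ) : kummerM a b 0 = 1 := by
  unfold kummerM
  rw [tsum_eq_single 0]
  · simp [poch]
  · intro n hn; simp [hn]

lemma kM_hasDerivAt (a : ℝ) {b : ℝ} (hb : 0 < b) (z : ℝ) :
    HasDerivAt (kummerM a b) (a / b * kummerM (a+1) (b+1) z) z := by
  set R := |z| + 1 with hR
  have hRpos : 0 < R := by positivity
  set u : ℕ → ℝ := fun n => |kc a b n| * (n * R ^ (n-1)) with hu
  have hsu : Summable u := by
    rw [← summable_nat_add_iff 1]
    have := (kc_summable (a+1) (show 0 < b + 1 by linarith) R).abs.mul_left |a / b|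
    refine this.congr ?_
    intro n
    simp only [hu, Nat.add_sub_cancel]
    rw [abs_mul, ← mul_assoc, ← abs_mul, ← kc_deriv a hb, abs_mul, abs_of_pos (pow_pos hRpos n),
      abs_of_pos (show (0:ℝ) < n + 1 by positivity)]
    push_cast; ring
  have := hasDerivAt_tsum_of_isPreconnected (g := fun n z => kc a b n * z ^ n)
    (g' := fun n z => kc a b n * (n * z ^ (n-1))) (t := Metric.ball 0 R) (y₀ := 0) (y := z)
    hsu Metric.isOpen_ball (convex_ball 0 R).isPreconnected
    (fun n y _ => (hasDerivAt_pow n y).const_mul _)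
    (fun n y hy => by
      rw [Real.norm_eq_abs, abs_mul, abs_mul, abs_pow, Nat.abs_cast]
      simp only [hu]
      have : |y| ≤ R := by simpa using (Metric.mem_ball.1 hy).le
      gcongr)
    (by simpa using hRpos) (kc_summable a hb 0) (by simp [hR])
  have h2 : ∑' n : ℕ, kc a b n * (n * z ^ (n-1)) = a / b * kummerM (a+1) (b+1) z := by
    have h3 := kM_hasSum_deriv a hb z
    have h4 : HasSum (fun n : ℕ => kc a b n * (n * z ^ (n-1))) (a / b * kummerM (a+1) (b+1) z) := by
      rw [← hasSum_nat_add_iff' 1]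
      simp only [Finset.range_one, Finset.sum_singleton, Nat.cast_zero, zero_mul, mul_zero, sub_zero]
      convert! h3 using 1
      funext n
      push_cast
      try rw [Nat.add_sub_cancel]
      ring
    exact h4.tsum_eq
  rw [← h2]
  exact this

/-- The confluent equation. -/
lemma kM_ode (a : ℝ) {b : ℝ} (hb : 0 < b) (z : ℝ) :
    z * (a / b * ((a+1) / (b+1) * kummerM (a+1+1) (b+1+1) z))
      = (z - b) * (a / b * kummerM (a+1) (b+1) z) + a * kummerM a b z := by
  have h0 := kM_hasSum a hb z
  have h1 := kM_hasSum_deriv a hb z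
  have h2 := (kM_hasSum_deriv (a+1) (show 0 < b + 1 by linarith) z).mul_left (a / b)
  have s1 : HasSum (fun n : ℕ => kc a b n * n * z ^ n) (z * (a / b * kummerM (a+1) (b+1) z)) := by
    rw [← hasSum_nat_add_iff' 1]
    simp only [Finset.range_one, Finset.sum_singleton, Nat.cast_zero, zero_mul, mul_zero, sub_zero]
    convert! h1.mul_left z using 1
    funext n
    push_cast
    ring
  have s2 : HasSum (fun n : ℕ => kc a b (n+1) * (n+1) * n * z ^ n)
      (z * (a / b * ((a+1) / (b+1) * kummerM (a+1+1) (b+1+1) z))) := by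
    rw [← hasSum_nat_add_iff' 1]
    simp only [Finset.range_one, Finset.sum_singleton, Nat.cast_zero, zero_mul, mul_zero, sub_zero]
    convert! h2.mul_left z using 1
    funext n
    have := kc_deriv a hb (n+1)
    push_cast at this ⊢
    rw [mul_comm] at this
    rw [this]
    ring
  have key := ((s2.add (h1.mul_left b)).sub s1).sub (h0.mul_left a)
  have hz : (fun n : ℕ => kc a b (n+1) * (n+1) * n * z ^ n + b * (kc a b (n+1) * (n+1) * z ^ n)
      - kc a b n * n * z ^ n - a * (kc a b n * z ^ n)) = fun _ => 0 := by
    funext n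
    rw [kc_succ a hb]
    have h2 : b + n ≠ 0 := by positivity
    have h3 : (n:ℝ) + 1 ≠ 0 := by positivity
    field_simp
    ring
  rw [hz] at key
  have := key.unique hasSum_zero
  linarith

lemma kM_pos {a b : ℝ} (ha : 0 < a) (hb : 0 < b) {z : ℝ} (hz : 0 ≤ z) : 0 < kummerM a b z := by
  have h := kM_hasSum a hb z
  have hn : ∀ n, 0 ≤ kc a b n * z ^ n := fun n => by
    have := poch_pos ha n
    have := poch_pos hb n
    unfold kc
    positivity
  have := h.summable.le_tsum 0 (fun n _ => hn n)
  rw [h.tsum_eq] at this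
  simp [kc, poch] at this
  linarith

end

section
/-- A linear second order equation with solution and derivative. -/
def Sol (p q : ℝ) (f f' : ℝ → ℝ) : Prop :=
  (∀ x, HasDerivAt f (f' x) x) ∧ ∀ x, HasDerivAt f' (p * x * f' x + q * f x) x

lemma sol_even (a σ : ℝ) :
    Sol (2 * σ) (4 * σ * a) (fun x => kummerM a (1/2) (σ * x ^ 2))
      (fun x => 2 * σ * x * (a / (1/2) * kummerM (a+1) (1/2+1) (σ * x ^ 2))) := by
  have hb : (0:ℝ) < 1/2 := by norm_num
  have hin : ∀ x : ℝ, HasDerivAt (fun x => σ * x ^ 2) (σ * (2 * x)) x := fun x => by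
    simpa using (hasDerivAt_pow 2 x).const_mul σ
  have hlin : ∀ x : ℝ, HasDerivAt (fun x => 2 * σ * x) (2 * σ) x := fun x => by
    simpa using (hasDerivAt_id x).const_mul (2 * σ)
  constructor
  · intro x
    have := (kM_hasDerivAt a hb (σ * x ^ 2)).comp x (hin x)
    convert! this using 1
    ring
  · intro x
    have h2 := ((kM_hasDerivAt (a+1) (show (0:ℝ) < 1/2+1 by norm_num) (σ * x ^ 2)).comp x
      (hin x)).const_mul (a / (1/2))
    have h3 := (hlin x).mul h2
    convert! h3 using 1
    have ode := kM_ode a hb (σ * x ^ 2)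
    simp only [Function.comp_def]
    linear_combination (-4 * σ) * ode

lemma sol_odd (a σ : ℝ) :
    Sol (2 * σ) (σ * (4 * a - 2)) (fun x => x * kummerM a (3/2) (σ * x ^ 2))
      (fun x => kummerM a (3/2) (σ * x ^ 2)
        + 2 * σ * x ^ 2 * (a / (3/2) * kummerM (a+1) (3/2+1) (σ * x ^ 2))) := by
  have hb : (0:ℝ) < 3/2 := by norm_num
  have hin : ∀ x : ℝ, HasDerivAt (fun x => σ * x ^ 2) (σ * (2 * x)) x := fun x => by
    simpa using (hasDerivAt_pow 2 x).const_mul σ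
  have hlin : ∀ x : ℝ, HasDerivAt (fun x => 2 * σ * x ^ 2) (2 * σ * (2 * x)) x := fun x => by
    simpa using (hasDerivAt_pow 2 x).const_mul (2 * σ)
  constructor
  · intro x
    have := (hasDerivAt_id x).mul ((kM_hasDerivAt a hb (σ * x ^ 2)).comp x (hin x))
    convert! this using 1
    simp only [Function.comp_def, id]
    ring
  · intro x
    have h1 := ((kM_hasDerivAt a hb (σ * x ^ 2)).comp x (hin x))
    have h2 := ((kM_hasDerivAt (a+1) (show (0:ℝ) < 3/2+1 by norm_num) (σ * x ^ 2)).comp x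
      (hin x)).const_mul (a / (3/2))
    have h3 := h1.add ((hlin x).mul h2)
    convert! h3 using 1
    have ode := kM_ode a hb (σ * x ^ 2)
    simp only [Function.comp_def]
    linear_combination (-4 * σ * x) * ode

lemma sol_gauss {q : ℝ} {f f' : ℝ → ℝ} (h : Sol 2 (q + 2) f f') :
    Sol (-2) q (fun x => Real.exp (-x ^ 2) * f x)
      (fun x => Real.exp (-x ^ 2) * (f' x - 2 * x * f x)) := by
  have hE : ∀ x : ℝ, HasDerivAt (fun x => Real.exp (-x ^ 2)) (Real.exp (-x ^ 2) * (-(2 * x))) x :=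
    fun x => by
      have := ((hasDerivAt_pow 2 x).neg).exp
      simpa using this
  have hlin : ∀ x : ℝ, HasDerivAt (fun x : ℝ => 2 * x) 2 x := fun x => by
    simpa using (hasDerivAt_id x).const_mul (2:ℝ)
  constructor
  · intro x
    have := (hE x).mul (h.1 x)
    convert! this using 1
    ring
  · intro x
    have := (hE x).mul ((h.2 x).sub ((hlin x).mul (h.1 x)))
    convert! this using 1
    simp only [Pi.sub_apply, Pi.mul_apply]
    ring

lemma Sol.comb {p q : ℝ} {f f' g g' : ℝ → ℝ} (hf : Sol p q f f') (hg : Sol p q g g') (A B : ℝ) :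
    Sol p q (fun x => A * f x + B * g x) (fun x => A * f' x + B * g' x) := by
  constructor
  · intro x
    exact ((hf.1 x).const_mul A).add ((hg.1 x).const_mul B)
  · intro x
    convert! ((hf.2 x).const_mul A).add ((hg.2 x).const_mul B) using 1
    ring

/-- The formula of Abel. -/
lemma sol_wronskian {q : ℝ} {f f' g g' : ℝ → ℝ} (hf : Sol (-2) q f f') (hg : Sol (-2) q g g')
    (x : ℝ) : f x * g' x - f' x * g x = Real.exp (-x ^ 2) * (f 0 * g' 0 - f' 0 * g 0) := by
  set W : ℝ → ℝ := fun x => Real.exp (x ^ 2) * (f x * g' x - f' x * g x) with hW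
  have hE : ∀ x : ℝ, HasDerivAt (fun x => Real.exp (x ^ 2)) (Real.exp (x ^ 2) * (2 * x)) x :=
    fun x => by
      have := ((hasDerivAt_pow 2 x)).exp
      simpa using this
  have hd : ∀ x, HasDerivAt W 0 x := by
    intro x
    have := (hE x).mul (((hf.1 x).mul (hg.2 x)).sub ((hf.2 x).mul (hg.1 x)))
    convert! this using 1
    simp only [Pi.sub_apply, Pi.mul_apply]
    ring
  have hc : W x = W 0 := is_const_of_deriv_eq_zero (fun y => (hd y).differentiableAt)
    (fun y => (hd y).deriv) x 0
  simp only [hW] at hc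
  have he : Real.exp (-x ^ 2) * Real.exp (x ^ 2) = 1 := by
    rw [← Real.exp_add]; simp
  have : Real.exp ((0:ℝ)^2) = 1 := by simp
  rw [this] at hc
  calc _ = (Real.exp (-x ^ 2) * Real.exp (x ^ 2)) * (f x * g' x - f' x * g x) := by rw [he]; ring
    _ = _ := by rw [mul_assoc, hc]; ring

lemma sol_unique {q : ℝ} {f f' g g' h h' : ℝ → ℝ} (hf : Sol (-2) q f f') (hg : Sol (-2) q g g')
    (hh : Sol (-2) q h h') (hpos : ∀ x, 0 < h x) (h0 : f 0 = g 0) (h1 : f' 0 = g' 0) (x : ℝ) :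
    f x = g x := by
  have hD := hf.comb hg 1 (-1)
  have hw : ∀ x, h x * (1 * f' x + -1 * g' x) - h' x * (1 * f x + -1 * g x) = 0 := fun x => by
    rw [sol_wronskian hh hD x, h0, h1]; ring
  have hd : ∀ x, HasDerivAt (fun x => (1 * f x + -1 * g x) / h x) 0 x := by
    intro x
    have := (hD.1 x).div (hh.1 x) (hpos x).ne'
    convert! this using 1
    have := hw x
    symm
    rw [div_eq_zero_iff]
    left
    linarith
  have hc := is_const_of_deriv_eq_zero (fun y => (hd y).differentiableAt)
    (fun y => (hd y).deriv) x 0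
  simp only [h0] at hc
  have := (hpos x).ne'
  field_simp at hc
  have h3 : (f x - g x) = 0 := by
    have h4 : (0:ℝ) = (1 * g 0 + -1 * g 0) / h 0 := by ring
    first
      | linarith
      | (simp at hc; linarith)
  linarith

/-- The two basic solutions. -/
noncomputable def phi1 (α x : ℝ) : ℝ := kummerM (-α/2) (1/2) (-x ^ 2)
noncomputable def phi2 (α x : ℝ) : ℝ := x * kummerM (-α/2+1/2) (3/2) (-x ^ 2)
noncomputable def dphi1 (α x : ℝ) : ℝ :=
  2 * (-1) * x * (-α/2 / (1/2) * kummerM (-α/2+1) (1/2+1) (-x ^ 2))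
noncomputable def dphi2 (α x : ℝ) : ℝ := kummerM (-α/2+1/2) (3/2) (-x ^ 2)
        + 2 * (-1) * x ^ 2 * ((-α/2+1/2) / (3/2) * kummerM (-α/2+1/2+1) (3/2+1) (-x ^ 2))

lemma sol_phi1 (α : ℝ) : Sol (-2) (2 * α) (phi1 α) (dphi1 α) := by
  have := sol_even (-α/2) (-1)
  simp only [neg_mul, one_mul] at this
  unfold phi1 dphi1
  convert! this using 1
  · ring
  · ring

lemma sol_phi2 (α : ℝ) : Sol (-2) (2 * α) (phi2 α) (dphi2 α) := by
  have := sol_odd (-α/2+1/2) (-1)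
  simp only [neg_mul, one_mul] at this
  unfold phi2 dphi2
  convert! this using 1
  · ring
  · ring

lemma sol_psi1 (α : ℝ) : Sol 2 (2 * α + 2) (fun x => kummerM (α/2+1/2) (1/2) (x ^ 2))
    (fun x => 2 * x * ((α/2+1/2) / (1/2) * kummerM (α/2+1/2+1) (1/2+1) (x ^ 2))) := by
  have := sol_even (α/2+1/2) 1
  simp only [one_mul, mul_one] at this
  convert! this using 1
  ring

lemma sol_psi2 (α : ℝ) : Sol 2 (2 * α + 2) (fun x => x * kummerM (α/2+1) (3/2) (x ^ 2))
    (fun x => kummerM (α/2+1) (3/2) (x ^ 2)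
        + 2 * x ^ 2 * ((α/2+1) / (3/2) * kummerM (α/2+1+1) (3/2+1) (x ^ 2))) := by
  have := sol_odd (α/2+1) 1
  simp only [one_mul, mul_one] at this
  convert! this using 1
  ring

lemma phi1_eq {α : ℝ} (hα : 0 < α) (x : ℝ) :
    phi1 α x = Real.exp (-x ^ 2) * kummerM (α/2+1/2) (1/2) (x ^ 2) := by
  have h := sol_gauss (sol_psi1 α)
  refine sol_unique (sol_phi1 α) h h ?_ ?_ ?_ x
  · intro x
    have := kM_pos (a := α/2+1/2) (b := 1/2) (by positivity) (by norm_num) (sq_nonneg x)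
    positivity
  · simp [phi1, kM_zero]
  · simp [dphi1, kM_zero]

lemma phi2_eq {α : ℝ} (hα : 0 < α) (x : ℝ) :
    phi2 α x = Real.exp (-x ^ 2) * (x * kummerM (α/2+1) (3/2) (x ^ 2)) := by
  refine sol_unique (sol_phi2 α) (sol_gauss (sol_psi2 α)) (sol_gauss (sol_psi1 α)) ?_ ?_ ?_ x
  · intro x
    have := kM_pos (a := α/2+1/2) (b := 1/2) (by positivity) (by norm_num) (sq_nonneg x)
    positivity
  · simp [phi2]
  · simp [dphi2, kM_zero]

lemma phi_wronskian (α x : ℝ) :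
    phi1 α x * dphi2 α x - dphi1 α x * phi2 α x = Real.exp (-x ^ 2) := by
  rw [sol_wronskian (sol_phi1 α) (sol_phi2 α) x]
  simp [phi1, phi2, dphi1, dphi2, kM_zero]

end

section
open MeasureTheory Set Filter Topology

lemma gamma_poch {a : ℝ} (ha : 0 < a) (n : ℕ) : Real.Gamma (a + n) = poch a n * Real.Gamma a := by
  induction n with
  | zero => simp [poch]
  | succ n ih =>
    have : a + ((n+1 : ℕ):ℝ) = (a + n) + 1 := by push_cast; ring
    rw [this, Real.Gamma_add_one (by positivity), ih, poch_succ_right]; ring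

lemma fact_even (n : ℕ) : (((2*n).factorial : ℕ) : ℝ) = 4 ^ n * (poch (1/2) n * n.factorial) := by
  induction n with
  | zero => simp [poch]
  | succ n ih =>
    have : 2 * (n+1) = (2*n+1)+1 := by ring
    rw [this, Nat.factorial_succ, Nat.factorial_succ, Nat.factorial_succ, poch_succ_right]
    push_cast
    rw [ih]; ring

lemma fact_odd (n : ℕ) : (((2*n+1).factorial : ℕ) : ℝ) = 4 ^ n * (poch (3/2) n * n.factorial) := by
  induction n with
  | zero => simp [poch]
  | succ n ih =>
    have : 2 * (n+1) + 1 = ((2*n+1)+1)+1 := by ring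
    rw [this, Nat.factorial_succ, Nat.factorial_succ (2*n+1), Nat.factorial_succ n, poch_succ_right]
    push_cast
    rw [ih]; ring

lemma mom {b q : ℝ} (hb : 0 < b) (hq : -1 < q) :
    ∫ x in Ioi (0:ℝ), x ^ q * Real.exp (-b * x ^ 2)
      = b ^ (-(q + 1) / 2) * (1 / 2) * Real.Gamma ((q + 1) / 2) := by
  have := integral_rpow_mul_exp_neg_mul_rpow (p := 2) two_pos hq hb
  rw [← this]
  simp

lemma mom1 {q : ℝ} (hq : -1 < q) :
    ∫ x in Ioi (0:ℝ), x ^ q * Real.exp (-x ^ 2) = (1 / 2) * Real.Gamma ((q + 1) / 2) := by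
  have := mom one_pos hq
  simpa using this

lemma mom1_int {q : ℝ} (hq : -1 < q) :
    IntegrableOn (fun x : ℝ => x ^ q * Real.exp (-x ^ 2)) (Ioi 0) := by
  simpa using integrableOn_rpow_mul_exp_neg_mul_sq one_pos hq

noncomputable def GG (α y : ℝ) : ℝ := ∫ x in Ioi (0:ℝ), x ^ α * Real.exp (-x ^ 2 - 2 * x * y)

lemma GG_int {α : ℝ} (hα : 0 < α) (y : ℝ) :
    IntegrableOn (fun x : ℝ => x ^ α * Real.exp (-x ^ 2 - 2 * x * y)) (Ioi 0) := by
  have h := (integrableOn_rpow_mul_exp_neg_mul_sq (b := 1/2) (by norm_num)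
    (show -1 < α by linarith)).mul_const (Real.exp (2 * y ^ 2))
  refine Integrable.mono' h ?_ ?_
  · apply Measurable.aestronglyMeasurable
    fun_prop
  · filter_upwards [ae_restrict_mem measurableSet_Ioi] with x hx
    have hx' : 0 ≤ x := (le_of_lt hx)
    rw [Real.norm_eq_abs, abs_of_nonneg (by positivity), mul_assoc (x ^ α), ← Real.exp_add]
    gcongr
    nlinarith [sq_nonneg (x + 2 * y)]

lemma cosh_series {α : ℝ} (hα : 0 < α) (y : ℝ) :
    ∫ x in Ioi (0:ℝ), x ^ α * Real.exp (-x ^ 2) * Real.cosh (2 * x * y)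
      = 1 / 2 * Real.Gamma (α/2+1/2) * kummerM (α/2+1/2) (1/2) (y ^ 2) := by
  set F : ℕ → ℝ → ℝ := fun n x =>
    ((2 * y) ^ (2*n) / (2*n).factorial) * (x ^ (α + 2 * n) * Real.exp (-x ^ 2)) with hF
  have ha : 0 < α/2+1/2 := by positivity
  have hFi : ∀ n, Integrable (F n) (volume.restrict (Ioi 0)) := fun n =>
    (mom1_int (show -1 < α + 2 * n by linarith [n.cast_nonneg (α := ℝ)])).const_mul _
  have hval : ∀ n, ∫ x in Ioi (0:ℝ), F n x
      = 1 / 2 * Real.Gamma (α/2+1/2) * (kc (α/2+1/2) (1/2) n * (y ^ 2) ^ n) := by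
    intro n
    simp only [hF]
    rw [integral_const_mul, mom1 (by linarith [n.cast_nonneg (α := ℝ)]), fact_even]
    have : (α + 2 * n + 1) / 2 = (α/2+1/2) + n := by ring
    rw [this, gamma_poch ha, kc, mul_pow, pow_mul, pow_mul]
    have := (poch_pos (show (0:ℝ) < 1/2 by norm_num) n).ne'
    norm_num
    field_simp
  have hnn : ∀ n, ∀ x ∈ Ioi (0:ℝ), 0 ≤ F n x := by
    intro n x hx
    have hx' : (0:ℝ) ≤ x := le_of_lt hx
    simp only [hF]
    rw [pow_mul]
    positivity
  have hnorm : ∀ n, ∫ x in Ioi (0:ℝ), ‖F n x‖ = ∫ x in Ioi (0:ℝ), F n x := fun n =>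
    setIntegral_congr_fun measurableSet_Ioi (fun x hx => by
      simp only [Real.norm_eq_abs, abs_of_nonneg (hnn n x hx)])
  have hs := (kM_hasSum (α/2+1/2) (show (0:ℝ) < 1/2 by norm_num) (y ^ 2)).mul_left
    (1 / 2 * Real.Gamma (α/2+1/2))
  have key := hasSum_integral_of_summable_integral_norm hFi (by
    simp only [hnorm, hval]; exact hs.summable)
  simp only [hval] at key
  rw [hs.unique key]
  refine setIntegral_congr_fun measurableSet_Ioi (fun x hx => ?_)
  have hx' : (0:ℝ) < x := hx
  have h2 := (Real.hasSum_cosh (2 * x * y)).mul_left (x ^ α * Real.exp (-x ^ 2))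
  rw [← h2.tsum_eq]
  congr 1
  funext n
  simp only [hF]
  rw [Real.rpow_add hx', show (2 * (n:ℝ)) = ((2 * n : ℕ) : ℝ) by push_cast; ring, Real.rpow_natCast]
  ring

lemma sinh_series {α : ℝ} (hα : 0 < α) {y : ℝ} (hy : 0 ≤ y) :
    ∫ x in Ioi (0:ℝ), x ^ α * Real.exp (-x ^ 2) * Real.sinh (2 * x * y)
      = Real.Gamma (α/2+1) * (y * kummerM (α/2+1) (3/2) (y ^ 2)) := by
  set F : ℕ → ℝ → ℝ := fun n x =>
    ((2 * y) ^ (2*n+1) / (2*n+1).factorial) * (x ^ (α + 2 * n + 1) * Real.exp (-x ^ 2)) with hF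
  have ha : 0 < α/2+1 := by positivity
  have hFi : ∀ n, Integrable (F n) (volume.restrict (Ioi 0)) := fun n =>
    (mom1_int (show -1 < α + 2 * n + 1 by linarith [n.cast_nonneg (α := ℝ)])).const_mul _
  have hval : ∀ n, ∫ x in Ioi (0:ℝ), F n x
      = Real.Gamma (α/2+1) * y * (kc (α/2+1) (3/2) n * (y ^ 2) ^ n) := by
    intro n
    simp only [hF]
    rw [integral_const_mul, mom1 (by linarith [n.cast_nonneg (α := ℝ)]), fact_odd]
    have : (α + 2 * n + 1 + 1) / 2 = (α/2+1) + n := by ring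
    rw [this, gamma_poch ha, kc, mul_pow, pow_succ, pow_succ, pow_mul, pow_mul]
    have := (poch_pos (show (0:ℝ) < 3/2 by norm_num) n).ne'
    norm_num
    field_simp
  have hnn : ∀ n, ∀ x ∈ Ioi (0:ℝ), 0 ≤ F n x := by
    intro n x hx
    have hx' : (0:ℝ) ≤ x := le_of_lt hx
    simp only [hF]
    positivity
  have hnorm : ∀ n, ∫ x in Ioi (0:ℝ), ‖F n x‖ = ∫ x in Ioi (0:ℝ), F n x := fun n =>
    setIntegral_congr_fun measurableSet_Ioi (fun x hx => by
      simp only [Real.norm_eq_abs, abs_of_nonneg (hnn n x hx)])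
  have hs := (kM_hasSum (α/2+1) (show (0:ℝ) < 3/2 by norm_num) (y ^ 2)).mul_left
    (Real.Gamma (α/2+1) * y)
  have key := hasSum_integral_of_summable_integral_norm hFi (by
    simp only [hnorm, hval]; exact hs.summable)
  simp only [hval] at key
  rw [← mul_assoc, hs.unique key]
  refine setIntegral_congr_fun measurableSet_Ioi (fun x hx => ?_)
  have hx' : (0:ℝ) < x := hx
  have h2 := (Real.hasSum_sinh (2 * x * y)).mul_left (x ^ α * Real.exp (-x ^ 2))
  rw [← h2.tsum_eq]
  congr 1
  funext n
  simp only [hF]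
  rw [add_assoc, Real.rpow_add hx', show (2 * (n:ℝ) + 1) = ((2 * n + 1 : ℕ) : ℝ) by push_cast; ring,
    Real.rpow_natCast]
  ring

lemma GG_add {α : ℝ} (hα : 0 < α) (y : ℝ) :
    GG α (-y) + GG α y = Real.Gamma (α/2+1/2) * kummerM (α/2+1/2) (1/2) (y ^ 2) := by
  have h := cosh_series hα y
  have : GG α (-y) + GG α y =
      2 * ∫ x in Ioi (0:ℝ), x ^ α * Real.exp (-x ^ 2) * Real.cosh (2 * x * y) := by
    unfold GG
    rw [← integral_add (GG_int hα _) (GG_int hα _), ← integral_const_mul]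
    congr 1
    funext x
    rw [Real.cosh_eq, sub_eq_add_neg (-x ^ 2), sub_eq_add_neg (-x ^ 2), Real.exp_add, Real.exp_add]
    ring_nf
  rw [this, h]; ring

lemma GG_sub {α : ℝ} (hα : 0 < α) {y : ℝ} (hy : 0 ≤ y) :
    GG α (-y) - GG α y = 2 * Real.Gamma (α/2+1) * (y * kummerM (α/2+1) (3/2) (y ^ 2)) := by
  have h := sinh_series hα hy
  have : GG α (-y) - GG α y =
      2 * ∫ x in Ioi (0:ℝ), x ^ α * Real.exp (-x ^ 2) * Real.sinh (2 * x * y) := by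
    unfold GG
    rw [← integral_sub (GG_int hα _) (GG_int hα _), ← integral_const_mul]
    congr 1
    funext x
    rw [Real.sinh_eq, sub_eq_add_neg (-x ^ 2), sub_eq_add_neg (-x ^ 2), Real.exp_add, Real.exp_add]
    ring_nf
  rw [this, h]; ring

lemma GG_pos {α : ℝ} (hα : 0 < α) (y : ℝ) : 0 < GG α y := by
  unfold GG
  rw [setIntegral_pos_iff_support_of_nonneg_ae]
  · have : Ioi (0:ℝ) ⊆ Function.support (fun x : ℝ => x ^ α * Real.exp (-x ^ 2 - 2 * x * y)) := by
      intro x hx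
      have hx' : (0:ℝ) < x := hx
      exact (show 0 < x ^ α * Real.exp (-x ^ 2 - 2 * x * y) by positivity).ne'
    rw [inter_eq_right.2 this]
    simp
  · filter_upwards [ae_restrict_mem measurableSet_Ioi] with x hx
    have hx' : (0:ℝ) < x := hx
    simp only [Pi.zero_apply]
    positivity
  · exact GG_int hα y

end

section
open MeasureTheory Set Filter Topology

lemma GG_neg_eq {α : ℝ} (hα : 0 < α) {y : ℝ} (hy : 0 < y) :
    Real.exp (-y ^ 2) * GG α (-y) / y ^ α
      = ∫ w : ℝ, (max (1 + w / y) 0) ^ α * Real.exp (-1 * w ^ 2) := by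
  have h1 : Real.exp (-y ^ 2) * GG α (-y)
      = ∫ x : ℝ, (max x 0) ^ α * Real.exp (-1 * (x - y) ^ 2) := by
    unfold GG
    rw [← integral_const_mul, ← setIntegral_eq_integral_of_forall_compl_eq_zero (s := Ioi (0:ℝ))
      (f := fun x : ℝ => (max x 0) ^ α * Real.exp (-1 * (x - y) ^ 2))]
    · refine setIntegral_congr_fun measurableSet_Ioi (fun x hx => ?_)
      have hx' : (0:ℝ) < x := hx
      simp only [max_eq_left hx'.le]
      rw [mul_left_comm, ← Real.exp_add]
      congr 2
      ring
    · intro x hx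
      have : x ≤ 0 := not_lt.1 hx
      rw [max_eq_right this, Real.zero_rpow hα.ne', zero_mul]
  rw [h1, ← integral_add_right_eq_self _ y, div_eq_mul_inv, ← integral_mul_const]
  congr 1
  funext w
  have : max (w + y) 0 = y * max (1 + w / y) 0 := by
    rw [mul_max_of_nonneg _ _ hy.le]
    congr 1
    · field_simp; ring
    · simp
  rw [this, Real.mul_rpow hy.le (le_max_right _ _)]
  have : y ^ α ≠ 0 := by positivity
  rw [add_sub_cancel_right]
  field_simp

lemma GG_neg_tendsto {α : ℝ} (hα : 0 < α) :
    Tendsto (fun y => Real.exp (-y ^ 2) * GG α (-y) / y ^ α) atTop (𝓝 (Real.sqrt Real.pi)) := by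
  have hg := integral_gaussian 1
  rw [div_one] at hg
  rw [← hg]
  have key : Tendsto (fun y : ℝ => ∫ w : ℝ, (max (1 + w / y) 0) ^ α * Real.exp (-1 * w ^ 2)) atTop
      (𝓝 (∫ w : ℝ, Real.exp (-1 * w ^ 2))) := by
    apply tendsto_integral_filter_of_dominated_convergence
      (fun w => Real.exp (α ^ 2 / 2) * Real.exp (-(1/2) * w ^ 2))
    · refine Eventually.of_forall (fun y => ?_)
      apply Measurable.aestronglyMeasurable
      fun_prop
    · filter_upwards [eventually_ge_atTop 1] with y hy
      refine Eventually.of_forall (fun w => ?_)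
      rw [Real.norm_eq_abs, abs_of_nonneg (by positivity)]
      have h1 : max (1 + w / y) 0 ≤ Real.exp |w| := by
        apply max_le _ (Real.exp_pos _).le
        have h2 : w / y ≤ |w| := by
          calc w / y ≤ |w| / y := by gcongr; exact le_abs_self w
            _ ≤ |w| / 1 := by gcongr
            _ = |w| := div_one _
        linarith [Real.add_one_le_exp |w|]
      calc _ ≤ (Real.exp |w|) ^ α * Real.exp (-1 * w ^ 2) := by gcongr
        _ = Real.exp (|w| * α + -1 * w ^ 2) := by rw [← Real.exp_mul, ← Real.exp_add]
        _ ≤ Real.exp (α ^ 2 / 2 + -(1/2) * w ^ 2) := by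
          rw [Real.exp_le_exp]
          have := sq_abs w
          nlinarith [sq_nonneg (|w| - α)]
        _ = _ := Real.exp_add _ _
    · exact (integrable_exp_neg_mul_sq (by norm_num)).const_mul _
    · refine Eventually.of_forall (fun w => ?_)
      have h1 : Tendsto (fun y : ℝ => max (1 + w / y) 0) atTop (𝓝 (max (1 + 0) 0)) :=
        (tendsto_const_nhds.add (tendsto_const_nhds.div_atTop tendsto_id)).max tendsto_const_nhds
      have h2 := (h1.rpow_const (p := α) (Or.inr hα.le)).mul_const (Real.exp (-1 * w ^ 2))
      simpa using h2
  refine key.congr' ?_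
  filter_upwards [eventually_gt_atTop 0] with y hy
  rw [GG_neg_eq hα hy]

lemma GG_tendsto {α : ℝ} (hα : 0 < α) :
    Tendsto (fun y => Real.exp (-y ^ 2) * GG α y / y ^ α) atTop (𝓝 0) := by
  have h1 : Tendsto (fun y : ℝ => Real.exp (-y ^ 2) * GG α 0) atTop (𝓝 0) := by
    have : Tendsto (fun y : ℝ => Real.exp (-y ^ 2)) atTop (𝓝 0) :=
      Real.tendsto_exp_neg_atTop_nhds_zero.comp (tendsto_pow_atTop two_ne_zero)
    simpa using this.mul_const (GG α 0)
  refine tendsto_of_tendsto_of_tendsto_of_le_of_le' tendsto_const_nhds h1 ?_ ?_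
  · filter_upwards [eventually_ge_atTop 0] with y hy
    have := GG_pos hα y
    positivity
  · filter_upwards [eventually_ge_atTop 1] with y hy
    have h2 : GG α y ≤ GG α 0 := by
      unfold GG
      refine setIntegral_mono_on (GG_int hα y) (GG_int hα 0) measurableSet_Ioi (fun x hx => ?_)
      have hx' : (0:ℝ) < x := hx
      gcongr
      linarith
    have h3 : 1 ≤ y ^ α := Real.one_le_rpow hy hα.le
    have := GG_pos hα y
    calc _ ≤ Real.exp (-y ^ 2) * GG α y / 1 := by gcongr
      _ ≤ _ := by rw [div_one]; gcongr

lemma phi1_tendsto {α : ℝ} (hα : 0 < α) :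
    Tendsto (fun y => phi1 α y / y ^ α) atTop (𝓝 (Real.sqrt Real.pi / Real.Gamma (α/2+1/2))) := by
  have hG : Real.Gamma (α/2+1/2) ≠ 0 := (Real.Gamma_pos_of_pos (by positivity)).ne'
  have := ((GG_neg_tendsto hα).add (GG_tendsto hα)).div_const (Real.Gamma (α/2+1/2))
  rw [add_zero] at this
  refine this.congr (fun y => ?_)
  rw [phi1_eq hα, ← add_div, ← mul_add, GG_add hα]
  field_simp

lemma phi2_tendsto {α : ℝ} (hα : 0 < α) :
    Tendsto (fun y => phi2 α y / y ^ α) atTop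
      (𝓝 (Real.sqrt Real.pi / (2 * Real.Gamma (α/2+1)))) := by
  have hG : Real.Gamma (α/2+1) ≠ 0 := (Real.Gamma_pos_of_pos (by positivity)).ne'
  have := ((GG_neg_tendsto hα).sub (GG_tendsto hα)).div_const (2 * Real.Gamma (α/2+1))
  rw [sub_zero] at this
  refine this.congr' ?_
  filter_upwards [eventually_ge_atTop 0] with y hy
  rw [phi2_eq hα, ← sub_div, ← mul_sub, GG_sub hα hy]
  field_simp

end

section
open MeasureTheory Set Filter Topology

noncomputable def Er (y : ℝ) : ℝ := ∫ w in (0:ℝ)..y, Real.exp (-1 * w ^ 2)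

lemma Er_deriv (y : ℝ) : HasDerivAt Er (Real.exp (-1 * y ^ 2)) y := by
  have hc : Continuous (fun w : ℝ => Real.exp (-1 * w ^ 2)) := by fun_prop
  exact intervalIntegral.integral_hasDerivAt_right (hc.intervalIntegrable _ _)
    (hc.stronglyMeasurableAtFilter _ _) hc.continuousAt

lemma Er_top : Tendsto Er atTop (𝓝 (Real.sqrt Real.pi / 2)) := by
  have h := integral_gaussian_Ioi 1
  rw [div_one] at h
  rw [← h]
  exact intervalIntegral_tendsto_integral_Ioi 0
    (integrable_exp_neg_mul_sq one_pos).integrableOn tendsto_id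

lemma Er_neg (y : ℝ) : Er (-y) = - Er y := by
  unfold Er
  have := intervalIntegral.integral_comp_neg (a := 0) (b := y)
    (fun w : ℝ => Real.exp (-1 * w ^ 2))
  simp only [neg_sq, neg_zero] at this
  rw [this, intervalIntegral.integral_symm]

lemma Er_bot : Tendsto Er atBot (𝓝 (-(Real.sqrt Real.pi / 2))) := by
  have := (Er_top.comp tendsto_neg_atBot_atTop).neg
  refine this.congr (fun y => ?_)
  simp [Er_neg]

lemma levy {p y : ℝ} (hp : 0 < p) (hy : 0 < y) :
    IntegrableOn (fun t : ℝ => p / (t * Real.sqrt t) * Real.exp (-(p ^ 2 / t) - y ^ 2 * t)) (Ioi 0) ∧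
    ∫ t in Ioi (0:ℝ), p / (t * Real.sqrt t) * Real.exp (-(p ^ 2 / t) - y ^ 2 * t)
      = Real.sqrt Real.pi * Real.exp (-(2 * p * y)) := by
  set c := Real.exp (4 * p * y) with hc
  set Q : ℝ → ℝ := fun t => Er (-(p / Real.sqrt t) + y * Real.sqrt t)
      + c * Er (-(p / Real.sqrt t) - y * Real.sqrt t) with hQ
  set L : ℝ := -(Real.sqrt Real.pi / 2) + c * (-(Real.sqrt Real.pi / 2)) with hL
  set P : ℝ → ℝ := fun t => Real.exp (-(2 * p * y)) * (if t ≤ 0 then L else Q t) with hP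
  have hs0 : Tendsto Real.sqrt (𝓝[>] 0) (𝓝[>] 0) := by
    apply tendsto_nhdsWithin_of_tendsto_nhds_of_eventually_within
    · have := Real.continuous_sqrt.tendsto 0
      rw [Real.sqrt_zero] at this
      exact this.mono_left nhdsWithin_le_nhds
    · filter_upwards [self_mem_nhdsWithin] with t ht
      exact Real.sqrt_pos.2 ht
  have hp0 : Tendsto (fun t => -(p / Real.sqrt t)) (𝓝[>] 0) atBot := by
    have : Tendsto (fun t => p * (Real.sqrt t)⁻¹) (𝓝[>] 0) atTop :=
      (tendsto_inv_nhdsGT_zero.comp hs0).const_mul_atTop hp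
    simp only [div_eq_mul_inv]
    exact tendsto_neg_atTop_atBot.comp this
  have hy0 : Tendsto (fun t => y * Real.sqrt t) (𝓝[>] 0) (𝓝 0) := by
    simpa using (hs0.mono_right nhdsWithin_le_nhds).const_mul y
  have hQ0 : Tendsto Q (𝓝[>] 0) (𝓝 L) := by
    refine (Er_bot.comp (hp0.atBot_add hy0)).add ((Er_bot.comp ?_).const_mul c)
    simpa [sub_eq_add_neg] using hp0.atBot_add hy0.neg
  have hsT : Tendsto (fun t => y * Real.sqrt t) atTop atTop :=
    Real.tendsto_sqrt_atTop.const_mul_atTop hy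
  have hpT : Tendsto (fun t => -(p / Real.sqrt t)) atTop (𝓝 0) := by
    simpa using (tendsto_const_nhds.div_atTop Real.tendsto_sqrt_atTop : Tendsto (fun t => p / Real.sqrt t) atTop (𝓝 0)).neg
  have hQT : Tendsto Q atTop (𝓝 (Real.sqrt Real.pi / 2 + c * (-(Real.sqrt Real.pi / 2)))) := by
    refine (Er_top.comp (hpT.add_atTop hsT)).add ((Er_bot.comp ?_).const_mul c)
    simpa [sub_eq_add_neg] using hpT.add_atBot (tendsto_neg_atTop_atBot.comp hsT)
  have hPT : Tendsto P atTop (𝓝 (Real.exp (-(2 * p * y)) *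
      (Real.sqrt Real.pi / 2 + c * (-(Real.sqrt Real.pi / 2))))) := by
    refine (hQT.congr' ?_).const_mul _
    filter_upwards [eventually_gt_atTop 0] with t ht
    rw [if_neg (not_le.2 ht)]
  have hP0 : ContinuousWithinAt P (Ici 0) 0 := by
    rw [← continuousWithinAt_Ioi_iff_Ici]
    unfold ContinuousWithinAt
    simp only [hP, le_refl, if_true]
    refine (hQ0.congr' ?_).const_mul _
    filter_upwards [self_mem_nhdsWithin] with t ht
    rw [if_neg (not_le.2 ht)]
  have hder : ∀ t ∈ Ioi (0:ℝ), HasDerivAt P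
      (p / (t * Real.sqrt t) * Real.exp (-(p ^ 2 / t) - y ^ 2 * t)) t := by
    intro t ht
    have ht' : (0:ℝ) < t := ht
    have hr : 0 < Real.sqrt t := Real.sqrt_pos.2 ht'
    have hrr : Real.sqrt t ^ 2 = t := Real.sq_sqrt ht'.le
    have hsd := Real.hasDerivAt_sqrt ht'.ne'
    have hpd : HasDerivAt (fun t => -(p / Real.sqrt t)) (p / (2 * (t * Real.sqrt t))) t := by
      have := ((hasDerivAt_const t p).div hsd hr.ne').neg
      convert! this using 1
      rw [hrr]
      field_simp
      ring
    have hyd := hsd.const_mul y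
    have d1 := (Er_deriv _).comp t (hpd.add hyd)
    have d2 := ((Er_deriv _).comp t (hpd.sub hyd)).const_mul c
    have dQ := (d1.add d2).const_mul (Real.exp (-(2 * p * y)))
    have hev : P =ᶠ[𝓝 t] fun t => Real.exp (-(2 * p * y)) * Q t := by
      filter_upwards [lt_mem_nhds ht'] with u hu
      simp only [hP]
      rw [if_neg (not_le.2 hu)]
    refine HasDerivAt.congr_of_eventuallyEq ?_ hev
    convert! dQ using 1
    simp only [Pi.add_apply, Pi.sub_apply]
    set r := Real.sqrt t with hrdef
    have e1 : Real.exp (-1 * (-(p / r) + y * r) ^ 2)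
        = Real.exp (2 * p * y) * Real.exp (-(p ^ 2 / t) - y ^ 2 * t) := by
      rw [← Real.exp_add]
      congr 1
      rw [← hrr]; field_simp; ring
    have e2 : c * Real.exp (-1 * (-(p / r) - y * r) ^ 2)
        = Real.exp (2 * p * y) * Real.exp (-(p ^ 2 / t) - y ^ 2 * t) := by
      rw [hc, ← Real.exp_add, ← Real.exp_add]
      congr 1
      rw [← hrr]; field_simp; ring
    rw [← mul_assoc c, e2, e1, Real.exp_neg]
    have := (Real.exp_pos (2 * p * y)).ne'
    field_simp
    ring
  have hnn : ∀ t ∈ Ioi (0:ℝ), 0 ≤ p / (t * Real.sqrt t) * Real.exp (-(p ^ 2 / t) - y ^ 2 * t) := by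
    intro t ht
    have ht' : (0:ℝ) < t := ht
    positivity
  refine ⟨integrableOn_Ioi_deriv_of_nonneg hP0 hder hnn hPT, ?_⟩
  rw [integral_Ioi_of_hasDerivAt_of_nonneg hP0 hder hnn hPT]
  simp only [hP, le_refl, if_true, hL]
  ring

lemma tricomi_eq {α : ℝ} (hα : 0 < α) {y : ℝ} (hy : 0 < y) :
    tricomiU (α/2+1/2) (1/2) (y ^ 2)
      = 2 * Real.sqrt Real.pi / (Real.Gamma (α/2+1/2) * Real.Gamma (α/2+1)) * GG α y := by
  set H : ℝ → ℝ → ℝ := fun x t => x ^ α * Real.exp (-x ^ 2) *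
    (x / (t * Real.sqrt t) * Real.exp (-(x ^ 2 / t) - y ^ 2 * t)) with hH
  set μ : Measure ℝ := volume.restrict (Ioi 0) with hμ
  have hin : ∀ x ∈ Ioi (0:ℝ), ∫ t, H x t ∂μ
      = Real.sqrt Real.pi * (x ^ α * Real.exp (-x ^ 2 - 2 * x * y)) := by
    intro x hx
    simp only [hH]
    rw [integral_const_mul, (levy hx hy).2, sub_eq_add_neg, Real.exp_add]
    ring
  have hmeas : Measurable (Function.uncurry H) := by
    simp only [hH, Function.uncurry_def]
    fun_prop
  have hintg : Integrable (Function.uncurry H) (μ.prod μ) := by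
    rw [integrable_prod_iff hmeas.aestronglyMeasurable]
    constructor
    · filter_upwards [ae_restrict_mem measurableSet_Ioi] with x hx
      have := (levy hx hy).1.const_mul (x ^ α * Real.exp (-x ^ 2))
      exact this
    · refine Integrable.congr ((GG_int hα y).const_mul (Real.sqrt Real.pi)) ?_
      filter_upwards [ae_restrict_mem measurableSet_Ioi] with x hx
      rw [← hin x hx]
      refine setIntegral_congr_fun measurableSet_Ioi (fun t ht => ?_)
      have hx' : (0:ℝ) < x := hx
      have ht' : (0:ℝ) < t := ht
      simp only [hH, Function.uncurry_apply_pair]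
      rw [Real.norm_eq_abs, abs_of_nonneg (by positivity)]
  have hswap := integral_integral_swap hintg
  have hL : ∫ x, ∫ t, H x t ∂μ ∂μ = Real.sqrt Real.pi * GG α y := by
    unfold GG
    rw [← integral_const_mul]
    exact setIntegral_congr_fun measurableSet_Ioi hin
  have hR : ∫ t, ∫ x, H x t ∂μ ∂μ = (1 / 2) * Real.Gamma (α/2+1) *
      ∫ t in Ioi (0:ℝ), Real.exp (-(y ^ 2) * t) * t ^ (α/2+1/2 - 1)
        * (1 + t) ^ ((1:ℝ)/2 - (α/2+1/2) - 1) := by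
    rw [← integral_const_mul]
    refine setIntegral_congr_fun measurableSet_Ioi (fun t ht => ?_)
    have ht' : (0:ℝ) < t := ht
    have h1 : ∫ x, H x t ∂μ = Real.exp (-(y ^ 2) * t) / (t * Real.sqrt t) *
        ∫ x in Ioi (0:ℝ), x ^ (α + 1) * Real.exp (-(1 + 1 / t) * x ^ 2) := by
      rw [← integral_const_mul]
      refine setIntegral_congr_fun measurableSet_Ioi (fun x hx => ?_)
      have hx' : (0:ℝ) < x := hx
      simp only [hH]
      rw [Real.rpow_add_one hx'.ne']
      have : Real.exp (-x ^ 2) * Real.exp (-(x ^ 2 / t) - y ^ 2 * t)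
          = Real.exp (-(y ^ 2) * t) * Real.exp (-(1 + 1 / t) * x ^ 2) := by
        rw [← Real.exp_add, ← Real.exp_add]
        congr 1
        ring
      linear_combination (x ^ α * (x / (t * Real.sqrt t))) * this
    rw [h1, mom (by positivity) (by linarith)]
    have e1 : (1 + 1 / t) ^ (-(α + 1 + 1) / 2)
        = (1 + t) ^ ((1:ℝ)/2 - (α/2+1/2) - 1) * t ^ (α/2+1) := by
      have : 1 + 1 / t = (1 + t) / t := by field_simp; ring
      rw [this, Real.div_rpow (by positivity) ht'.le]
      have h2 : -(α + 1 + 1) / 2 = (1:ℝ)/2 - (α/2+1/2) - 1 := by ring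
      have h3 : (1:ℝ)/2 - (α/2+1/2) - 1 = -(α/2+1) := by ring
      rw [h2, h3, Real.rpow_neg ht'.le, div_inv_eq_mul]
    have e2 : t ^ (α/2+1) = t ^ (α/2+1/2-1) * (t * Real.sqrt t) := by
      rw [Real.sqrt_eq_rpow, ← Real.rpow_one_add' ht'.le (by norm_num), ← Real.rpow_add ht']
      congr 1; ring
    rw [e1, e2]
    have e3 : (α + 1 + 1) / 2 = α/2+1 := by ring
    rw [e3]
    have hr : 0 < Real.sqrt t := Real.sqrt_pos.2 ht'
    field_simp
  rw [hL, hR] at hswap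
  unfold tricomiU
  have g1 : Real.Gamma (α/2+1/2) ≠ 0 := (Real.Gamma_pos_of_pos (by positivity)).ne'
  have g2 : Real.Gamma (α/2+1) ≠ 0 := (Real.Gamma_pos_of_pos (by positivity)).ne'
  rw [show 2 * Real.sqrt Real.pi / (Real.Gamma (α/2+1/2) * Real.Gamma (α/2+1)) * GG α y
      = 2 / (Real.Gamma (α/2+1/2) * Real.Gamma (α/2+1)) * (Real.sqrt Real.pi * GG α y) by ring, hswap]
  field_simp

end

section
open MeasureTheory Set Filter Topology

lemma heat_dx {α d : ℝ} {f f' : ℝ → ℝ} (hf : Sol (-2) (2 * α) f f')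
    {Ψ : ℝ → ℝ → ℝ}
    (hΨ : ∀ x t, Ψ x t = t ^ (α/2) * f (x / (2 * Real.sqrt (d * t)))) (t x : ℝ) :
    HasDerivAt (fun y => Ψ y t)
      (t ^ (α/2) * (f' (x / (2 * Real.sqrt (d * t))) / (2 * Real.sqrt (d * t)))) x := by
  simp only [hΨ]
  have h1 := (hasDerivAt_id x).div_const (2 * Real.sqrt (d * t))
  have h2 := ((hf.1 (x / (2 * Real.sqrt (d * t)))).comp x h1).const_mul (t ^ (α/2))
  convert! h2 using 1
  ring

lemma heat_eq {α d : ℝ} (hd : 0 < d) {f f' : ℝ → ℝ} (hf : Sol (-2) (2 * α) f f')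
    {Ψ : ℝ → ℝ → ℝ}
    (hΨ : ∀ x t, Ψ x t = t ^ (α/2) * f (x / (2 * Real.sqrt (d * t)))) {t : ℝ} (ht : 0 < t)
    (x : ℝ) :
    deriv (fun τ => Ψ x τ) t = d * deriv (deriv (fun y => Ψ y t)) x := by
  have e1 : deriv (fun y => Ψ y t) = fun x =>
      t ^ (α/2) * (f' (x / (2 * Real.sqrt (d * t))) / (2 * Real.sqrt (d * t))) := by
    funext x
    exact (heat_dx hf hΨ t x).deriv
  set r := Real.sqrt (d * t) with hr
  have hr0 : 0 < r := Real.sqrt_pos.2 (by positivity)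
  have hrr : r ^ 2 = d * t := Real.sq_sqrt (by positivity)
  set η := x / (2 * r) with hη
  have e2 : HasDerivAt (fun x => t ^ (α/2) * (f' (x / (2 * r)) / (2 * r)))
      (t ^ (α/2) * ((-2 * η * f' η + 2 * α * f η) / (2 * r) / (2 * r))) x := by
    have h1 := (hasDerivAt_id x).div_const (2 * r)
    have h2 := (((hf.2 (x / (2 * r))).comp x h1).div_const (2 * r)).const_mul (t ^ (α/2))
    convert! h2 using 1
    ring
  have e3 : HasDerivAt (fun τ => Ψ x τ)
      (α / 2 * t ^ (α/2 - 1) * f η + t ^ (α/2) * (f' η * (-(η / (2 * t))))) t := by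
    simp only [hΨ]
    have hdt : d * t ≠ 0 := by positivity
    have h0 : HasDerivAt (fun τ => d * τ) d t := by simpa using (hasDerivAt_id t).const_mul d
    have h1 := (h0.sqrt hdt).const_mul 2
    have h2 : HasDerivAt (fun τ => x / (2 * Real.sqrt (d * τ))) (-(η / (2 * t))) t := by
      have := (hasDerivAt_const t x).div h1 (by positivity)
      convert! this using 1
      rw [← hr, hη]
      have : d = r ^ 2 / t := by rw [hrr]; field_simp
      rw [this]
      field_simp
      ring
    have h3 := Real.hasDerivAt_rpow_const (p := α / 2) (Or.inl ht.ne')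
    have h4 : HasDerivAt f (f' η) (x / (2 * Real.sqrt (d * t))) := hf.1 η
    exact h3.mul (h4.comp t h2)
  rw [e1, e2.deriv, e3.deriv]
  rw [Real.rpow_sub_one ht.ne']
  have : d = r ^ 2 / t := by rw [hrr]; field_simp
  clear_value η r
  rw [this]
  field_simp
  ring

lemma phi1_pos {α : ℝ} (hα : 0 < α) (x : ℝ) : 0 < phi1 α x := by
  rw [phi1_eq hα]
  exact mul_pos (Real.exp_pos _) (kM_pos (by positivity) (by norm_num) (by positivity))

lemma tricomi_pos {α : ℝ} (hα : 0 < α) {y : ℝ} (hy : 0 < y) :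
    0 < tricomiU (α/2+1/2) (1/2) (y ^ 2) := by
  rw [tricomi_eq hα hy]
  have g1 := Real.Gamma_pos_of_pos (show 0 < α/2+1/2 by positivity)
  have g2 := Real.Gamma_pos_of_pos (show 0 < α/2+1 by positivity)
  have := GG_pos hα y
  have := Real.pi_pos
  positivity

lemma tricomi_conn {α : ℝ} (hα : 0 < α) {y : ℝ} (hy : 0 < y) :
    tricomiU (α/2+1/2) (1/2) (y ^ 2) * Real.exp (-y ^ 2)
      = Real.sqrt Real.pi / Real.Gamma (α/2+1) * phi1 α y
        - 2 * Real.sqrt Real.pi / Real.Gamma (α/2+1/2) * phi2 α y := by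
  rw [tricomi_eq hα hy, phi1_eq hα, phi2_eq hα]
  have g1 := Real.Gamma_pos_of_pos (show 0 < α/2+1/2 by positivity)
  have g2 := Real.Gamma_pos_of_pos (show 0 < α/2+1 by positivity)
  have h1 := GG_add hα y
  have h2 := GG_sub hα hy.le
  have : GG α y = (Real.Gamma (α/2+1/2) * kummerM (α/2+1/2) (1/2) (y ^ 2)
      - 2 * Real.Gamma (α/2+1) * (y * kummerM (α/2+1) (3/2) (y ^ 2))) / 2 := by
    linarith
  rw [this]
  field_simp

lemma phi_bracket {α : ℝ} (hα : 0 < α) (z E F : ℝ) (hE : E = -phi2 α z * F / phi1 α z) :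
    E * dphi1 α z + F * dphi2 α z = F / kummerM (α/2+1/2) (1/2) (z ^ 2) := by
  have hp := phi1_pos hα z
  have hw := phi_wronskian α z
  have hm : 0 < kummerM (α/2+1/2) (1/2) (z ^ 2) :=
    kM_pos (by positivity) (by norm_num) (by positivity)
  have he := phi1_eq hα z
  have : E * dphi1 α z + F * dphi2 α z = F * Real.exp (-z ^ 2) / phi1 α z := by
    rw [hE, ← hw]; field_simp; ring
  rw [this, he]
  have := Real.exp_pos (-z ^ 2)
  field_simp

lemma far_field {α d : ℝ} (hα : 0 < α) (hd : 0 < d) (E F : ℝ) {x : ℝ} (hx : 0 < x) :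
    Tendsto (fun t : ℝ => t ^ (α/2) * (E * phi1 α (x / (2 * Real.sqrt (d * t)))
        + F * phi2 α (x / (2 * Real.sqrt (d * t))))) (𝓝[>] 0)
      (𝓝 (x ^ α / (2 ^ α * d ^ (α/2)) * (E * (Real.sqrt Real.pi / Real.Gamma (α/2+1/2))
        + F * (Real.sqrt Real.pi / (2 * Real.Gamma (α/2+1)))))) := by
  have hη : Tendsto (fun t : ℝ => x / (2 * Real.sqrt (d * t))) (𝓝[>] 0) atTop := by
    have h1 : Tendsto (fun t : ℝ => 2 * Real.sqrt (d * t)) (𝓝[>] 0) (𝓝[>] 0) := by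
      apply tendsto_nhdsWithin_of_tendsto_nhds_of_eventually_within
      · have hc : Continuous (fun t : ℝ => 2 * Real.sqrt (d * t)) := by fun_prop
        have := hc.tendsto 0
        simp only [mul_zero, Real.sqrt_zero] at this
        exact this.mono_left nhdsWithin_le_nhds
      · filter_upwards [self_mem_nhdsWithin] with t ht
        have ht' : (0:ℝ) < t := ht
        have := Real.sqrt_pos.2 (mul_pos hd ht')
        show 0 < 2 * Real.sqrt (d * t)
        positivity
    simp only [div_eq_mul_inv]
    exact (tendsto_inv_nhdsGT_zero.comp h1).const_mul_atTop hx
  have h := ((((phi1_tendsto hα).comp hη).const_mul E).add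
    (((phi2_tendsto hα).comp hη).const_mul F)).const_mul (x ^ α / (2 ^ α * d ^ (α/2)))
  refine h.congr' ?_
  filter_upwards [self_mem_nhdsWithin] with t ht
  have ht' : (0:ℝ) < t := ht
  have hr := Real.sqrt_pos.2 (mul_pos hd ht')
  have key : t ^ (α/2) = x ^ α / (2 ^ α * d ^ (α/2)) / (x / (2 * Real.sqrt (d * t))) ^ α := by
    have e : Real.sqrt (d * t) ^ α = d ^ (α/2) * t ^ (α/2) := by
      rw [Real.sqrt_eq_rpow, ← Real.rpow_mul (by positivity), ← Real.mul_rpow hd.le ht'.le]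
      congr 1; ring
    rw [Real.div_rpow hx.le (by positivity), Real.mul_rpow (by norm_num) hr.le, e]
    have := Real.rpow_pos_of_pos hx α
    have := Real.rpow_pos_of_pos hd (α/2)
    have := Real.rpow_pos_of_pos (two_pos : (0:ℝ) < 2) α
    field_simp
  simp only [Function.comp]
  rw [key]
  ring

end

/-- main theorem. Under the restriction
`h₀ > 2^α Γ(α/2+1) k_s T_i d_s^{(α−1)/2}/(T_∞ √π)`, the similarity-type functions
built from the unique positive solution `ν` of equation (24) solve the two-phase
Stefan problem (1)–(7) with variable latent heat `γ x^α` and a convective boundary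
condition at the fixed face. -/
theorem statement_17 (α kl ks dl ds γ Ti Tinf h₀ : ℝ)
    (hα : 0 < α) (hαnotint : ∀ n : ℤ, α ≠ n)
    (hkl : 0 < kl) (hks : 0 < ks) (hdl : 0 < dl) (hds : 0 < ds)
    (hγ : 0 < γ) (hTi : 0 < Ti) (hTinf : 0 < Tinf) (hh₀ : 0 < h₀)
    (ω : ℝ) (hω : ω = Real.sqrt (dl / ds))
    (hcond : h₀ > (2:ℝ) ^ α * Real.Gamma (α / 2 + 1) * ks * Ti * ds ^ ((α - 1) / 2)
      / (Tinf * Real.sqrt Real.pi))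
    (ν : ℝ) (hνpos : 0 < ν)
    (hνeq :
      -(ks * Ti * ds ^ ((α - 1) / 2) / (γ * dl ^ ((α + 1) / 2))) *
          (1 / tricomiU (α / 2 + 1 / 2) (1 / 2) (ν ^ 2 * ω ^ 2))
        + h₀ * Tinf / (γ * (2:ℝ) ^ α * dl ^ ((α + 1) / 2)) *
          (1 / (kummerM (α / 2 + 1 / 2) (1 / 2) (ν ^ 2)
                + 2 * Real.sqrt dl * h₀ / kl * ν * kummerM (α / 2 + 1) (3 / 2) (ν ^ 2)))
        = ν ^ (α + 1))
    (s : ℝ → ℝ) (hs : ∀ t : ℝ, s t = 2 * ν * Real.sqrt (dl * t))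
    (Fl El Fs Es : ℝ)
    (hFl : Fl = -(2 * h₀ * Tinf * Real.sqrt dl * kummerM (-α / 2) (1 / 2) (-ν ^ 2)) /
      (kl * kummerM (-α / 2) (1 / 2) (-ν ^ 2)
        + 2 * Real.sqrt dl * h₀ * ν * kummerM (-α / 2 + 1 / 2) (3 / 2) (-ν ^ 2)))
    (hEl : El = -ν * kummerM (-α / 2 + 1 / 2) (3 / 2) (-ν ^ 2) * Fl /
      kummerM (-α / 2) (1 / 2) (-ν ^ 2))
    (hFs : Fs = -Ti * (2:ℝ) ^ (α + 1) * ds ^ (α / 2) *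
      kummerM (α / 2 + 1 / 2) (1 / 2) (ν ^ 2 * ω ^ 2) /
        tricomiU (α / 2 + 1 / 2) (1 / 2) (ν ^ 2 * ω ^ 2))
    (hEs : Es = -ν * ω * kummerM (-α / 2 + 1 / 2) (3 / 2) (-(ν ^ 2 * ω ^ 2)) * Fs /
      kummerM (-α / 2) (1 / 2) (-(ν ^ 2 * ω ^ 2)))
    (Ψl Ψs : ℝ → ℝ → ℝ)
    (hΨl : ∀ x t : ℝ, Ψl x t =
      t ^ (α / 2) *
        (El * kummerM (-α / 2) (1 / 2) (-(x / (2 * Real.sqrt (dl * t))) ^ 2)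
          + Fl * (x / (2 * Real.sqrt (dl * t))) *
              kummerM (-α / 2 + 1 / 2) (3 / 2) (-(x / (2 * Real.sqrt (dl * t))) ^ 2)))
    (hΨs : ∀ x t : ℝ, Ψs x t =
      t ^ (α / 2) *
        (Es * kummerM (-α / 2) (1 / 2) (-(x / (2 * Real.sqrt (ds * t))) ^ 2)
          + Fs * (x / (2 * Real.sqrt (ds * t))) *
              kummerM (-α / 2 + 1 / 2) (3 / 2) (-(x / (2 * Real.sqrt (ds * t))) ^ 2))) :
    (∀ t : ℝ, 0 < t → ∀ x : ℝ, 0 < x → x < s t →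
        deriv (fun τ => Ψl x τ) t = dl * deriv (deriv (fun y => Ψl y t)) x) ∧
    (∀ t : ℝ, 0 < t → ∀ x : ℝ, s t < x →
        deriv (fun τ => Ψs x τ) t = ds * deriv (deriv (fun y => Ψs y t)) x) ∧
    (∀ t : ℝ, 0 < t → Ψl (s t) t = 0 ∧ Ψs (s t) t = 0) ∧
    (∀ t : ℝ, 0 < t →
        ks * deriv (fun y => Ψs y t) (s t) - kl * deriv (fun y => Ψl y t) (s t)
          = γ * (s t) ^ α * deriv s t) ∧
    (∀ t : ℝ, 0 < t →
        kl * deriv (fun y => Ψl y t) 0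
          = h₀ * t ^ (-(1:ℝ) / 2) * (Ψl 0 t - Tinf * t ^ (α / 2))) ∧
    (∀ x : ℝ, 0 < x →
        Filter.Tendsto (fun t : ℝ => Ψs x t) (nhdsWithin 0 (Set.Ioi 0))
          (nhds (-Ti * x ^ α))) := by
  have hf_l : ∀ x t, Ψl x t = t ^ (α/2) *
      (fun z => El * phi1 α z + Fl * phi2 α z) (x / (2 * Real.sqrt (dl * t))) := by
    intro x t
    rw [hΨl]; simp only [phi1, phi2]; ring
  have hf_s : ∀ x t, Ψs x t = t ^ (α/2) *
      (fun z => Es * phi1 α z + Fs * phi2 α z) (x / (2 * Real.sqrt (ds * t))) := by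
    intro x t
    rw [hΨs]; simp only [phi1, phi2]; ring
  have sl := (sol_phi1 α).comb (sol_phi2 α) El Fl
  have ss := (sol_phi1 α).comb (sol_phi2 α) Es Fs
  have hωpos : 0 < ω := by rw [hω]; exact Real.sqrt_pos.2 (by positivity)
  have hz : 0 < ν * ω := mul_pos hνpos hωpos
  have hsq : ν ^ 2 * ω ^ 2 = (ν * ω) ^ 2 := by ring
  rw [hsq] at hFs hEs hνeq
  have ha := Real.sqrt_pos.2 hdl
  have hb := Real.sqrt_pos.2 hds
  have hωab : ω = Real.sqrt dl / Real.sqrt ds := by rw [hω, Real.sqrt_div hdl.le]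
  have hEl' : El = -phi2 α ν * Fl / phi1 α ν := by
    rw [hEl]; simp only [phi1, phi2]; ring
  have hEs' : Es = -phi2 α (ν * ω) * Fs / phi1 α (ν * ω) := by
    rw [hEs]; simp only [phi1, phi2]; ring
  have hp1 := phi1_pos hα ν
  have hp2 := phi1_pos hα (ν * ω)
  have hηl : ∀ t, 0 < t → s t / (2 * Real.sqrt (dl * t)) = ν := by
    intro t ht
    have := Real.sqrt_pos.2 (mul_pos hdl ht)
    rw [hs]; field_simp
  have hηs : ∀ t, 0 < t → s t / (2 * Real.sqrt (ds * t)) = ν * ω := by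
    intro t ht
    have := Real.sqrt_pos.2 ht
    rw [hs, hωab, Real.sqrt_mul hdl.le, Real.sqrt_mul hds.le]; field_simp
  have hM1 : 0 < kummerM (α/2+1/2) (1/2) (ν ^ 2) :=
    kM_pos (by positivity) (by norm_num) (by positivity)
  have hM2 : 0 < kummerM (α/2+1) (3/2) (ν ^ 2) :=
    kM_pos (by positivity) (by norm_num) (by positivity)
  have hMs : 0 < kummerM (α/2+1/2) (1/2) ((ν * ω) ^ 2) :=
    kM_pos (by positivity) (by norm_num) (by positivity)
  have hU := tricomi_pos hα hz
  have hden : 0 < kl * kummerM (α/2+1/2) (1/2) (ν ^ 2)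
      + 2 * Real.sqrt dl * h₀ * ν * kummerM (α/2+1) (3/2) (ν ^ 2) := by positivity
  have hν1 := phi1_eq hα ν
  have hν2 := phi2_eq hα ν
  have hexp := Real.exp_pos (-ν ^ 2)
  have hFl' : Fl = -(2 * h₀ * Tinf * Real.sqrt dl * kummerM (α/2+1/2) (1/2) (ν ^ 2)) /
      (kl * kummerM (α/2+1/2) (1/2) (ν ^ 2)
        + 2 * Real.sqrt dl * h₀ * ν * kummerM (α/2+1) (3/2) (ν ^ 2)) := by
    have e : Fl = -(2 * h₀ * Tinf * Real.sqrt dl * phi1 α ν) /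
      (kl * phi1 α ν + 2 * Real.sqrt dl * h₀ * phi2 α ν) := by
      rw [hFl]; simp only [phi1, phi2]; ring
    rw [e, hν1, hν2]
    rw [show kl * (Real.exp (-ν ^ 2) * kummerM (α/2+1/2) (1/2) (ν ^ 2))
      + 2 * Real.sqrt dl * h₀ * (Real.exp (-ν ^ 2) * (ν * kummerM (α/2+1) (3/2) (ν ^ 2)))
      = Real.exp (-ν ^ 2) * (kl * kummerM (α/2+1/2) (1/2) (ν ^ 2)
        + 2 * Real.sqrt dl * h₀ * ν * kummerM (α/2+1) (3/2) (ν ^ 2)) by ring]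
    rw [show -(2 * h₀ * Tinf * Real.sqrt dl *
        (Real.exp (-ν ^ 2) * kummerM (α/2+1/2) (1/2) (ν ^ 2)))
        = Real.exp (-ν ^ 2) *
          -(2 * h₀ * Tinf * Real.sqrt dl * kummerM (α/2+1/2) (1/2) (ν ^ 2)) by ring]
    exact mul_div_mul_left _ _ hexp.ne'
  have hEl2 : El = -(ν * kummerM (α/2+1) (3/2) (ν ^ 2)) * Fl
      / kummerM (α/2+1/2) (1/2) (ν ^ 2) := by
    rw [hEl', hν1, hν2]
    field_simp
  refine ⟨?_, ?_, ?_, ?_, ?_, ?_⟩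
  · intro t ht x _ _
    exact heat_eq hdl sl hf_l ht x
  · intro t ht x _
    exact heat_eq hds ss hf_s ht x
  · intro t ht
    rw [hf_l, hf_s, hηl t ht, hηs t ht]
    constructor
    · simp only [hEl']; field_simp; simp
    · simp only [hEs']; field_simp; simp
  · intro t ht
    rw [(heat_dx sl hf_l t (s t)).deriv, (heat_dx ss hf_s t (s t)).deriv, hηl t ht, hηs t ht,
      phi_bracket hα ν El Fl hEl', phi_bracket hα (ν * ω) Es Fs hEs']
    have hc := Real.sqrt_pos.2 ht
    have hsd : deriv s t = ν * Real.sqrt dl / Real.sqrt t := by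
      have h0 : HasDerivAt (fun τ => dl * τ) dl t := by
        simpa using (hasDerivAt_id t).const_mul dl
      have h1 := (h0.sqrt (by positivity)).const_mul (2 * ν)
      have : s = fun t => 2 * ν * Real.sqrt (dl * t) := funext hs
      rw [this, h1.deriv, Real.sqrt_mul hdl.le]
      have : dl = Real.sqrt dl * Real.sqrt dl := (Real.mul_self_sqrt hdl.le).symm
      rw [mul_div_assoc', div_eq_div_iff (by positivity) (by positivity)]
      linear_combination 2 * ν * Real.sqrt t * this
    have hsα : s t ^ α = 2 ^ α * ν ^ α * dl ^ (α/2) * t ^ (α/2) := by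
      rw [hs, Real.mul_rpow (by positivity) (by positivity), Real.mul_rpow (by norm_num) hνpos.le,
        Real.sqrt_eq_rpow, ← Real.rpow_mul (by positivity), Real.mul_rpow hdl.le ht.le]
      rw [show 1 / 2 * α = α / 2 by ring]
      ring
    have q1 : dl ^ ((α + 1) / 2) = dl ^ (α/2) * Real.sqrt dl := by
      rw [Real.sqrt_eq_rpow, ← Real.rpow_add hdl]; congr 1; ring
    have q2 : ds ^ ((α - 1) / 2) = ds ^ (α/2) / Real.sqrt ds := by
      rw [Real.sqrt_eq_rpow, ← Real.rpow_sub hds]; congr 1; ring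
    have q3 : (2:ℝ) ^ (α + 1) = 2 ^ α * 2 := Real.rpow_add_one (by norm_num) α
    have q4 : ν ^ (α + 1) = ν ^ α * ν := Real.rpow_add_one hνpos.ne' α
    have hsub : kummerM (α / 2 + 1 / 2) (1 / 2) (ν ^ 2)
                + 2 * Real.sqrt dl * h₀ / kl * ν * kummerM (α / 2 + 1) (3 / 2) (ν ^ 2)
        = (kl * kummerM (α/2+1/2) (1/2) (ν ^ 2)
      + 2 * Real.sqrt dl * h₀ * ν * kummerM (α/2+1) (3/2) (ν ^ 2)) / kl := by
      field_simp
    rw [hsub, q1, q2, q4] at hνeq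
    rw [hsd, hsα, hFs, hFl', q3, Real.sqrt_mul hdl.le, Real.sqrt_mul hds.le]
    have p1 := Real.rpow_pos_of_pos hdl (α/2)
    have p2 := Real.rpow_pos_of_pos hds (α/2)
    have p3 := Real.rpow_pos_of_pos (two_pos : (0:ℝ) < 2) α
    have p4 := Real.rpow_pos_of_pos ht (α/2)
    generalize kl * kummerM (α/2+1/2) (1/2) (ν ^ 2)
      + 2 * Real.sqrt dl * h₀ * ν * kummerM (α/2+1) (3/2) (ν ^ 2) = D at *
    generalize kummerM (α/2+1/2) (1/2) (ν ^ 2) = m1 at *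
    generalize kummerM (α/2+1/2) (1/2) ((ν * ω) ^ 2) = m2 at *
    generalize tricomiU (α/2+1/2) (1/2) ((ν * ω) ^ 2) = U at *
    generalize dl ^ (α/2) = A at *
    generalize ds ^ (α/2) = B at *
    generalize t ^ (α/2) = T at *
    generalize (2:ℝ) ^ α = P at *
    generalize ν ^ α = N at *
    generalize Real.sqrt dl = a at *
    generalize Real.sqrt ds = b at *
    generalize Real.sqrt t = c at *
    trans γ * P * A * a * T / c * (N * ν)
    · rw [← hνeq]
      field_simp
      ring
    · ring
  · intro t ht
    rw [(heat_dx sl hf_l t 0).deriv, hf_l]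
    have hc := Real.sqrt_pos.2 ht
    have z1 : dphi1 α 0 = 0 := by simp [dphi1]
    have z2 : dphi2 α 0 = 1 := by simp [dphi2, kM_zero]
    have z3 : phi1 α 0 = 1 := by simp [phi1, kM_zero]
    have z4 : phi2 α 0 = 0 := by simp [phi2]
    simp only [zero_div, z1, z2, z3, z4]
    have q : t ^ (-(1:ℝ) / 2) = 1 / Real.sqrt t := by
      rw [Real.sqrt_eq_rpow, neg_div, Real.rpow_neg ht.le]
      simp
    rw [q, Real.sqrt_mul hdl.le, hEl2, hFl']
    generalize hD : kl * kummerM (α/2+1/2) (1/2) (ν ^ 2)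
      + 2 * Real.sqrt dl * h₀ * ν * kummerM (α/2+1) (3/2) (ν ^ 2) = D at *
    generalize kummerM (α/2+1/2) (1/2) (ν ^ 2) = m1 at *
    generalize kummerM (α/2+1) (3/2) (ν ^ 2) = m2 at *
    field_simp
    rw [← hD]
    ring
  · intro x hx
    have h := far_field hα hds Es Fs hx
    simp only [hf_s]
    convert! h using 2
    have hconn := tricomi_conn hα hz
    have g1 := Real.Gamma_pos_of_pos (show 0 < α/2+1/2 by positivity)
    have g2 := Real.Gamma_pos_of_pos (show 0 < α/2+1 by positivity)
    have hb : Es * (Real.sqrt Real.pi / Real.Gamma (α/2+1/2))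
        + Fs * (Real.sqrt Real.pi / (2 * Real.Gamma (α/2+1)))
        = Fs / (2 * phi1 α (ν * ω)) * (tricomiU (α/2+1/2) (1/2) ((ν * ω) ^ 2)
          * Real.exp (-(ν * ω) ^ 2)) := by
      rw [hconn, hEs']
      field_simp
      ring
    have q3 : (2:ℝ) ^ (α + 1) = 2 ^ α * 2 := Real.rpow_add_one (by norm_num) α
    have p2 := Real.rpow_pos_of_pos hds (α/2)
    have p3 := Real.rpow_pos_of_pos (two_pos : (0:ℝ) < 2) α
    have p4 := Real.exp_pos (-(ν * ω) ^ 2)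
    rw [hb, phi1_eq hα, hFs, q3]
    generalize kummerM (α/2+1/2) (1/2) ((ν * ω) ^ 2) = m2 at *
    generalize tricomiU (α/2+1/2) (1/2) ((ν * ω) ^ 2) = U at *
    field_simp
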